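/- Let I, α be any interpretation–assignment pair and C_s any constraint system. If a non-deterministic simplification rule (SDis or ∪Down) is applicable to C_s and I, α satisfies C_s, then there is at least one non-deterministic choice transforming C_s into a system C'_s such that I, α satisfies C_s if and only if I, α satisfies C'_s. -/

import Mathlib

/-!
Syntactic entailment is sound: whatever `C_s ⊢ K` derives holds in every model `(I, α)` of `C_s`
(`entails_sound`). Since `(I, α)` satisfies `C_s`, it suffices to pick a choice whose added
constraint is already true in `(I, α)`; both systems are then satisfied.

For SDis, satisfaction of `x = x₁ ⊔ … ⊔ xₙ` says directly that some disjunct `xᵢ` has the same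
value as `x`. For ∪Down, soundness turns `C_s ⊢ x = ∃f:xᵢ` into `α(xᵢ) ∈ f^I(α(x))`, and
`f^I(α(x)) = g^I(α(y)) ∪ h^I(α(z))` places `α(xᵢ)` in one of the two parts, which determines
the choice. Which branch was used to witness applicability is irrelevant, as the two ∪Down choices
have the same side conditions.
-/

namespace FeatSetLogic

/-! ### Syntax

All symbol alphabets (variables, relation/feature symbols, constants,
primitive concepts and atoms) are taken to be `ℕ`.  The primitive concept
`0` plays the role of `⊥` and `1` the role of `⊤`. -/

/-- The `P`-category of the BNF: variables, atoms, constants, primitive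
concepts and their negations. -/
inductive PAtom : Type where
  | var (x : ℕ)
  | atom (a : ℕ)
  | const (c : ℕ)
  | prim (A : ℕ)
  | negVar (x : ℕ)
  | negAtom (a : ℕ)
  | negConst (c : ℕ)
  | negPrim (A : ℕ)
deriving DecidableEq

/-- Feature terms with set descriptions and set operations. -/
inductive FTerm : Type where
  | patom (p : PAtom)
  | feat (f : ℕ) (T : FTerm)                         -- f : T
  | exi (f : ℕ) (T : FTerm)                          -- ∃ f : T
  | fa (f : ℕ) (p : PAtom)                           -- ∀ f : P
  | setDesc (f : ℕ) (n : ℕ) (ts : Fin n → FTerm)     -- f : {T₁,…,Tₙ}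
  | setDescEq (f : ℕ) (n : ℕ) (ts : Fin n → FTerm)   -- f : {T₁,…,Tₙ}₌
  | union (f : ℕ) (g : ℕ) (x : ℕ) (h : ℕ) (y : ℕ)    -- f : g(x) ∪ h(y)
  | inter (f : ℕ) (g : ℕ) (x : ℕ) (h : ℕ) (y : ℕ)    -- f : g(x) ∩ h(y)
  | supset (f : ℕ) (g : ℕ) (x : ℕ)                   -- f : ⊇ g(x)
  | disjRel (f : ℕ) (x : ℕ) (g : ℕ) (y : ℕ)          -- f(x) ≠ g(y)
  | conj (S T : FTerm)                               -- S ⊓ T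

/-- The feature term `x` (a variable used as a term). -/
abbrev vt (x : ℕ) : FTerm := .patom (.var x)

/-! ### Semantics -/

/-- An interpretation `I = (U^I, ·^I)`: relation symbols denote binary
relations, atoms denote pairwise distinct elements without successors. -/
structure Interp : Type 1 where
  U : Type
  rel : ℕ → U → U → Prop
  atomI : ℕ → U
  atom_inj : Function.Injective atomI
  atomic : ∀ a f e, ¬ rel f (atomI a) e

/-- `f^I(e) = { e' | (e,e') ∈ f^I }`. -/
def Interp.img (I : Interp) (f : ℕ) (e : I.U) : Set I.U := {e' | I.rel f e e'}

/-- An `I`-assignment: variables denote elements, distinct constants denote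
distinct elements, primitive concepts denote subsets with `α ⊥ = ∅` and
`α ⊤ = U^I`. -/
structure Assign (I : Interp) : Type where
  vval : ℕ → I.U
  cval : ℕ → I.U
  cval_inj : Function.Injective cval
  pval : ℕ → Set I.U
  pval_bot : pval 0 = ∅
  pval_top : pval 1 = Set.univ

/-- Denotation of `P`-category terms. -/
def pdenot (I : Interp) (α : Assign I) : PAtom → Set I.U
  | .var x => {α.vval x}
  | .atom a => {I.atomI a}
  | .const c => {α.cval c}
  | .prim A => α.pval A
  | .negVar x => {α.vval x}ᶜ
  | .negAtom a => {I.atomI a}ᶜ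
  | .negConst c => {α.cval c}ᶜ
  | .negPrim A => (α.pval A)ᶜ

/-- The denotation function `[[·]]^{I,α}`. -/
def denot (I : Interp) (α : Assign I) : FTerm → Set I.U
  | .patom p => pdenot I α p
  | .feat f T => {e | ∃ e', I.img f e = {e'} ∧ e' ∈ denot I α T}
  | .exi f T => {e | ∃ e', I.rel f e e' ∧ e' ∈ denot I α T}
  | .fa f p => {e | ∀ e', I.rel f e e' → e' ∈ pdenot I α p}
  | .setDesc f n ts =>
      {e | ∃ es : Fin n → I.U, I.img f e = Set.range es ∧
            ∀ i, es i ∈ denot I α (ts i)}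
  | .setDescEq f n ts =>
      {e | ∃ es : Fin n → I.U, (I.img f e).ncard = n ∧ I.img f e = Set.range es ∧
            ∀ i, es i ∈ denot I α (ts i)}
  | .union f g x h y => {e | I.img f e = I.img g (α.vval x) ∪ I.img h (α.vval y)}
  | .inter f g x h y => {e | I.img f e = I.img g (α.vval x) ∩ I.img h (α.vval y)}
  | .supset f g x => {e | I.img g (α.vval x) ⊆ I.img f e}
  | .disjRel f x g y => {e | I.img f (α.vval x) ∩ I.img g (α.vval y) = ∅}
  | .conj S T => denot I α S ∩ denot I α T

/-- A term is consistent if its denotation is nonempty for some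
interpretation and assignment. -/
def Consistent (T : FTerm) : Prop :=
  ∃ (I : Interp) (α : Assign I), (denot I α T).Nonempty

/-! ### Constraint systems -/

/-- Containment constraints `x = T` and disjunctive constraints
`x = x₁ ⊔ … ⊔ xₙ`. -/
inductive Constraint : Type where
  | contain (x : ℕ) (T : FTerm)
  | sqcup (x : ℕ) (n : ℕ) (xs : Fin n → ℕ)

/-- The variable-equality constraint `x = y`. -/
abbrev eqC (x y : ℕ) : Constraint := .contain x (vt y)

/-- The constraint `x = ∃ f : y`. -/
abbrev exC (x f y : ℕ) : Constraint := .contain x (.exi f (vt y))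

/-- Satisfaction of a single constraint. -/
def satC (I : Interp) (α : Assign I) : Constraint → Prop
  | .contain x T => α.vval x ∈ denot I α T
  | .sqcup x n xs => ∃ i : Fin n, α.vval x = α.vval (xs i)

/-- A constraint system: a (multiset-)conjunction of constraints. -/
abbrev CSys := Multiset Constraint

/-- `I, α` satisfies every constraint of `Cs`. -/
def satS (I : Interp) (α : Assign I) (Cs : CSys) : Prop := ∀ K ∈ Cs, satC I α K

/-- Consistency of a constraint system. -/
def SysConsistent (Cs : CSys) : Prop := ∃ (I : Interp) (α : Assign I), satS I α Cs

/-! ### Variables and sizes -/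

def PAtom.pvars : PAtom → Set ℕ
  | .var x => {x}
  | .negVar x => {x}
  | _ => ∅

/-- The variables occurring in a term. -/
def tvars : FTerm → Set ℕ
  | .patom p => p.pvars
  | .feat _ T => tvars T
  | .exi _ T => tvars T
  | .fa _ p => p.pvars
  | .setDesc _ _ ts => ⋃ i, tvars (ts i)
  | .setDescEq _ _ ts => ⋃ i, tvars (ts i)
  | .union _ _ x _ y => {x, y}
  | .inter _ _ x _ y => {x, y}
  | .supset _ _ x => {x}
  | .disjRel _ x _ y => {x, y}
  | .conj S T => tvars S ∪ tvars T

def cvars : Constraint → Set ℕ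
  | .contain x T => insert x (tvars T)
  | .sqcup x _ xs => insert x (Set.range xs)

/-- The variables occurring in a constraint system. -/
def svars (Cs : CSys) : Set ℕ := {v | ∃ K ∈ Cs, v ∈ cvars K}

/-- Size of a term. -/
def tsize : FTerm → ℕ
  | .patom _ => 1
  | .feat _ T => 1 + tsize T
  | .exi _ T => 1 + tsize T
  | .fa _ _ => 1
  | .setDesc _ n ts => 1 + n + ∑ i, tsize (ts i)
  | .setDescEq _ n ts => 1 + n + ∑ i, tsize (ts i)
  | .union _ _ _ _ _ => 1
  | .inter _ _ _ _ _ => 1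
  | .supset _ _ _ => 1
  | .disjRel _ _ _ _ => 1
  | .conj S T => 1 + tsize S + tsize T

/-! ### Syntactic entailment -/

/-- The paper's syntactic entailment relation `C_s ⊢ φ`. -/
inductive Entails (Cs : CSys) : Constraint → Prop where
  | mem {K : Constraint} : K ∈ Cs → Entails Cs K
  | refl (x : ℕ) : Entails Cs (eqC x x)
  | symm {x y : ℕ} : Entails Cs (eqC x y) → Entails Cs (eqC y x)
  | trans {x y z : ℕ} :
      Entails Cs (eqC x y) → Entails Cs (eqC y z) → Entails Cs (eqC x z)
  | negSymm {x y : ℕ} :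
      Entails Cs (.contain x (.patom (.negVar y))) →
      Entails Cs (.contain y (.patom (.negVar x)))
  | featEx {x f y : ℕ} :
      Entails Cs (.contain x (.feat f (vt y))) → Entails Cs (exC x f y)
  | featFa {x f y : ℕ} :
      Entails Cs (.contain x (.feat f (vt y))) →
      Entails Cs (.contain x (.fa f (.var y)))
  | setEx {x f : ℕ} {n : ℕ} {ts : Fin n → FTerm} {y : ℕ} (i : Fin n) :
      Entails Cs (.contain x (.setDesc f n ts)) → ts i = vt y →
      Entails Cs (exC x f y)

/-- `succ(x,f) = { y | C_s ⊢ x = ∃f:y }`. -/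
def succ (Cs : CSys) (x f : ℕ) : Set ℕ := {y | Entails Cs (exC x f y)}

/-! ### Decomposition and simplification rules -/

/-- `T` is a variable (as a term). -/
def FTerm.isVar : FTerm → Prop
  | .patom (.var _) => True
  | _ => False

/-- `T` is an atom or a constant (the range `c̄` of rules DForall, SConst). -/
def IsAtomConst (T : FTerm) : Prop :=
  (∃ a, T = .patom (.atom a)) ∨ (∃ c, T = .patom (.const c))

/-- The range `C̄` of rules SForallE and SForall:
`C, ¬C, ¬a, ¬c, ¬z`. -/
def IsCbar : PAtom → Prop
  | .prim _ => True
  | .negPrim _ => True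
  | .negAtom _ => True
  | .negConst _ => True
  | .negVar _ => True
  | _ => False

def rsub (x y z : ℕ) : ℕ := if z = x then y else z

def PAtom.subst (x y : ℕ) : PAtom → PAtom
  | .var z => .var (rsub x y z)
  | .negVar z => .negVar (rsub x y z)
  | p => p

/-- Substitution `[x/y]` (replace the variable `x` by `y`) on terms. -/
def FTerm.subst (x y : ℕ) : FTerm → FTerm
  | .patom p => .patom (p.subst x y)
  | .feat f T => .feat f (T.subst x y)
  | .exi f T => .exi f (T.subst x y)
  | .fa f p => .fa f (p.subst x y)
  | .setDesc f n ts => .setDesc f n (fun i => (ts i).subst x y)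
  | .setDescEq f n ts => .setDescEq f n (fun i => (ts i).subst x y)
  | .union f g a h b => .union f g (rsub x y a) h (rsub x y b)
  | .inter f g a h b => .inter f g (rsub x y a) h (rsub x y b)
  | .supset f g a => .supset f g (rsub x y a)
  | .disjRel f a g b => .disjRel f (rsub x y a) g (rsub x y b)
  | .conj S T => .conj (S.subst x y) (T.subst x y)

def Constraint.subst (x y : ℕ) : Constraint → Constraint
  | .contain z T => .contain (rsub x y z) (T.subst x y)
  | .sqcup z n xs => .sqcup (rsub x y z) n (fun i => rsub x y (xs i))

/-- Substitution `[x/y]C_s` on constraint systems. -/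
def substS (x y : ℕ) (Cs : CSys) : CSys := Cs.map (Constraint.subst x y)

/-- The multiset of constraints `F 0 ∧ … ∧ F (n-1)`. -/
def finCons {n : ℕ} (F : Fin n → Constraint) : CSys :=
  Multiset.map F (Finset.univ : Finset (Fin n)).val

/-- The decomposition rules of Figure 2. -/
inductive DecompStep : CSys → CSys → Prop where
  /-- (DFeat), for `F = f`. -/
  | dfeat {Cs Cs' rest : CSys} {x f y : ℕ} {T : FTerm} :
      Cs = .contain x (.feat f T) ::ₘ rest →
      ¬ T.isVar → y ∉ svars Cs →
      Cs' = .contain x (.feat f (vt y)) ::ₘ .contain y T ::ₘ rest →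
      DecompStep Cs Cs'
  /-- (DFeat), for `F = ∃f`. -/
  | dexi {Cs Cs' rest : CSys} {x f y : ℕ} {T : FTerm} :
      Cs = .contain x (.exi f T) ::ₘ rest →
      ¬ T.isVar → y ∉ svars Cs →
      Cs' = .contain x (.exi f (vt y)) ::ₘ .contain y T ::ₘ rest →
      DecompStep Cs Cs'
  /-- (DForall). -/
  | dforall {Cs Cs' rest : CSys} {x f y : ℕ} {p : PAtom} :
      Cs = .contain x (.fa f p) ::ₘ rest →
      ((∃ a, p = .atom a) ∨ (∃ c, p = .const c)) → y ∉ svars Cs →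
      Cs' = .contain x (.fa f (.var y)) ::ₘ .contain y (.patom p) ::ₘ rest →
      DecompStep Cs Cs'
  /-- (DSet). -/
  | dset {Cs Cs' rest : CSys} {x f n : ℕ} {ts : Fin n → FTerm} {xs : Fin n → ℕ} :
      Cs = .contain x (.setDesc f n ts) ::ₘ rest →
      (∃ i, ¬ (ts i).isVar) →
      Function.Injective xs → (∀ i, xs i ∉ svars Cs) →
      Cs' = .contain x (.setDesc f n (fun i => vt (xs i))) ::ₘ
            (finCons (fun i => .contain (xs i) (ts i)) + rest) →
      DecompStep Cs Cs'
  /-- (DSetF). -/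
  | dsetEq {Cs Cs' rest : CSys} {x f n : ℕ} {ts : Fin n → FTerm} {xs : Fin n → ℕ} :
      Cs = .contain x (.setDescEq f n ts) ::ₘ rest →
      (∃ i, ¬ (ts i).isVar) →
      Function.Injective xs → (∀ i, xs i ∉ svars Cs) →
      Cs' = .contain x (.setDesc f n (fun i => vt (xs i))) ::ₘ
            .contain x (.setDescEq f n (fun i => vt (xs i))) ::ₘ
            (finCons (fun i => .contain (xs i) (ts i)) + rest) →
      DecompStep Cs Cs'
  /-- (DConj). -/
  | dconj {Cs Cs' rest : CSys} {x : ℕ} {S T : FTerm} :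
      Cs = .contain x (.conj S T) ::ₘ rest →
      Cs' = .contain x S ::ₘ .contain x T ::ₘ rest →
      DecompStep Cs Cs'

/-- The deterministic constraint simplification rules
(Figures 3, 4 and 5, except SDis and ∪Down). -/
inductive SimpStepD : CSys → CSys → Prop where
  /-- (SEquals). -/
  | sequals {Cs Cs' rest : CSys} {x y : ℕ} :
      Cs = eqC x y ::ₘ rest → x ≠ y → x ∈ svars rest →
      Cs' = eqC x y ::ₘ substS x y rest →
      SimpStepD Cs Cs'
  /-- (SConst). -/
  | sconst {Cs Cs' rest : CSys} {x y : ℕ} {T : FTerm} :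
      Cs = .contain x T ::ₘ .contain y T ::ₘ rest → IsAtomConst T →
      Cs' = eqC x y ::ₘ .contain x T ::ₘ rest →
      SimpStepD Cs Cs'
  /-- (SFeat), where `F` ranges over `f, ∃f, ∀f`. -/
  | sfeat {Cs Cs' rest : CSys} {x f y z : ℕ} {T : FTerm} :
      Cs = .contain x (.feat f (vt y)) ::ₘ .contain x T ::ₘ rest →
      (T = .feat f (vt z) ∨ T = .exi f (vt z) ∨ T = .fa f (.var z)) →
      Cs' = .contain x (.feat f (vt y)) ::ₘ eqC y z ::ₘ rest →
      SimpStepD Cs Cs'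
  /-- (SExists). -/
  | sexists {Cs Cs' rest : CSys} {x f y z : ℕ} :
      Cs = .contain x (.exi f (vt y)) ::ₘ .contain x (.fa f (.var z)) ::ₘ rest →
      Cs' = .contain x (.feat f (vt y)) ::ₘ eqC y z ::ₘ rest →
      SimpStepD Cs Cs'
  /-- (SForallE). -/
  | sforallE {Cs Cs' rest : CSys} {x f y : ℕ} {p : PAtom} :
      Cs = .contain x (.fa f p) ::ₘ .contain x (.exi f (vt y)) ::ₘ rest →
      IsCbar p → ¬ Entails rest (.contain y (.patom p)) →
      Cs' = .contain x (.fa f p) ::ₘ .contain x (.exi f (vt y)) ::ₘ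
            .contain y (.patom p) ::ₘ rest →
      SimpStepD Cs Cs'
  /-- (SSetF), where `F` ranges over `f, ∀f`. -/
  | ssetF {Cs Cs' rest : CSys} {x f y n : ℕ} {xs : Fin n → ℕ} {T : FTerm} :
      Cs = .contain x T ::ₘ .contain x (.setDesc f n (fun i => vt (xs i))) ::ₘ rest →
      (T = .feat f (vt y) ∨ T = .fa f (.var y)) →
      Cs' = .contain x (.feat f (vt y)) ::ₘ (finCons (fun i => eqC y (xs i)) + rest) →
      SimpStepD Cs Cs'
  /-- (SSet). -/
  | sset {Cs Cs' rest : CSys} {x f y : ℕ} {ts : Fin 1 → FTerm} :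
      Cs = .contain x (.setDesc f 1 ts) ::ₘ rest → ts 0 = vt y →
      Cs' = .contain x (.feat f (vt y)) ::ₘ rest →
      SimpStepD Cs Cs'
  /-- (SDup). -/
  | sdup {Cs Cs' rest : CSys} {x f n : ℕ} {xs : Fin (n+1) → ℕ} {i j : Fin (n+1)} :
      Cs = .contain x (.setDesc f (n+1) (fun i => vt (xs i))) ::ₘ rest →
      i ≠ j → xs i = xs j →
      Cs' = .contain x (.setDesc f n (fun k => vt (xs (j.succAbove k)))) ::ₘ rest →
      SimpStepD Cs Cs'
  /-- (SForall). -/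
  | sforall {Cs Cs' rest : CSys} {x f n : ℕ} {xs : Fin n → ℕ} {p : PAtom} :
      Cs = .contain x (.fa f p) ::ₘ
           .contain x (.setDesc f n (fun i => vt (xs i))) ::ₘ rest →
      IsCbar p → (∃ i, ¬ Entails rest (.contain (xs i) (.patom p))) →
      Cs' = .contain x (.setDesc f n (fun i => vt (xs i))) ::ₘ
            (finCons (fun i => .contain (xs i) (.patom p)) + rest) →
      SimpStepD Cs Cs'
  /-- (SSetE). -/
  | ssetE {Cs Cs' rest : CSys} {x f y n : ℕ} {xs : Fin n → ℕ} :
      Cs = .contain x (.exi f (vt y)) ::ₘ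
           .contain x (.setDesc f n (fun i => vt (xs i))) ::ₘ rest →
      Cs' = .contain x (.setDesc f n (fun i => vt (xs i))) ::ₘ .sqcup y n xs ::ₘ rest →
      SimpStepD Cs Cs'
  /-- (SSetSet). -/
  | ssetSet {Cs Cs' rest : CSys} {x f n m : ℕ} {xs : Fin n → ℕ} {ys : Fin m → ℕ} :
      Cs = .contain x (.setDesc f n (fun i => vt (xs i))) ::ₘ
           .contain x (.setDesc f m (fun j => vt (ys j))) ::ₘ rest →
      n ≤ m →
      Cs' = .contain x (.setDesc f n (fun i => vt (xs i))) ::ₘ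
            (finCons (fun i => Constraint.sqcup (xs i) m ys) +
             (finCons (fun j => Constraint.sqcup (ys j) n xs) + rest)) →
      SimpStepD Cs Cs'
  /-- (⊆). -/
  | ssubset {Cs Cs' rest : CSys} {x f g y yi : ℕ} :
      Cs = .contain x (.supset f g y) ::ₘ rest →
      ¬ Entails rest (exC x f yi) → Entails rest (exC y g yi) →
      Cs' = .contain x (.supset f g y) ::ₘ exC x f yi ::ₘ rest →
      SimpStepD Cs Cs'
  /-- (∪Left). -/
  | unionLeft {Cs Cs' rest : CSys} {x f g y h z : ℕ} :
      Cs = .contain x (.union f g y h z) ::ₘ rest →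
      ¬ Entails rest (.contain x (.supset f g y)) →
      Cs' = .contain x (.union f g y h z) ::ₘ .contain x (.supset f g y) ::ₘ rest →
      SimpStepD Cs Cs'
  /-- (∪Right). -/
  | unionRight {Cs Cs' rest : CSys} {x f g y h z : ℕ} :
      Cs = .contain x (.union f g y h z) ::ₘ rest →
      ¬ Entails rest (.contain x (.supset f h z)) →
      Cs' = .contain x (.union f g y h z) ::ₘ .contain x (.supset f h z) ::ₘ rest →
      SimpStepD Cs Cs'
  /-- (∩Down). -/
  | interDown {Cs Cs' rest : CSys} {x f g y h z xi : ℕ} :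
      Cs = .contain x (.inter f g y h z) ::ₘ rest →
      Entails rest (exC x f xi) →
      (¬ Entails rest (exC y g xi) ∨ ¬ Entails rest (exC z h xi)) →
      Cs' = .contain x (.inter f g y h z) ::ₘ exC y g xi ::ₘ exC z h xi ::ₘ rest →
      SimpStepD Cs Cs'
  /-- (∩Up). -/
  | interUp {Cs Cs' rest : CSys} {x f g y h z xi : ℕ} :
      Cs = .contain x (.inter f g y h z) ::ₘ rest →
      ¬ Entails rest (exC x f xi) →
      Entails rest (exC y g xi) → Entails rest (exC z h xi) →
      Cs' = .contain x (.inter f g y h z) ::ₘ exC x f xi ::ₘ rest →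
      SimpStepD Cs Cs'

/-- The non-deterministic simplification rules SDis and ∪Down; each
constructor corresponds to one non-deterministic choice. -/
inductive SimpStepN : CSys → CSys → Prop where
  /-- (SDis), choosing the disjunct `i`. -/
  | sdis {Cs Cs' rest : CSys} {x n : ℕ} {xs : Fin n → ℕ} (i : Fin n) :
      Cs = .sqcup x n xs ::ₘ rest →
      (¬ ∃ j : Fin n, Entails rest (eqC x (xs j))) →
      Cs' = .sqcup x n xs ::ₘ eqC x (xs i) ::ₘ rest →
      SimpStepN Cs Cs'
  /-- (∪Down), left choice. -/
  | unionDownL {Cs Cs' rest : CSys} {x f g y h z xi : ℕ} :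
      Cs = .contain x (.union f g y h z) ::ₘ rest →
      Entails rest (exC x f xi) →
      ¬ Entails rest (exC y g xi) → ¬ Entails rest (exC z h xi) →
      Cs' = .contain x (.union f g y h z) ::ₘ exC y g xi ::ₘ rest →
      SimpStepN Cs Cs'
  /-- (∪Down), right choice. -/
  | unionDownR {Cs Cs' rest : CSys} {x f g y h z xi : ℕ} :
      Cs = .contain x (.union f g y h z) ::ₘ rest →
      Entails rest (exC x f xi) →
      ¬ Entails rest (exC y g xi) → ¬ Entails rest (exC z h xi) →
      Cs' = .contain x (.union f g y h z) ::ₘ exC z h xi ::ₘ rest →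
      SimpStepN Cs Cs'

/-- Any simplification rule application. -/
def SimpStep (Cs Cs' : CSys) : Prop := SimpStepD Cs Cs' ∨ SimpStepN Cs Cs'

/-- A constraint system is basic if no decomposition rule applies. -/
def Basic (Cs : CSys) : Prop := ∀ Cs', ¬ DecompStep Cs Cs'

/-- A constraint system is in normal form if no rule applies to it. -/
def NormalForm (Cs : CSys) : Prop :=
  (∀ Cs', ¬ DecompStep Cs Cs') ∧ (∀ Cs', ¬ SimpStepD Cs Cs') ∧
  (∀ Cs', ¬ SimpStepN Cs Cs')

/-- One step of the consistency checking procedure: decomposition rules are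
applied first; once the system is basic, simplification rules are applied. -/
def ProcStep (Cs Cs' : CSys) : Prop :=
  DecompStep Cs Cs' ∨ (Basic Cs ∧ SimpStep Cs Cs')

/-- The denotation of `x = ∃f:y` unfolds to an `f`-edge between the values of `x` and `y`. -/
theorem satC_exC {I : Interp} {α : Assign I} {x f y : ℕ} :
    satC I α (exC x f y) ↔ I.rel f (α.vval x) (α.vval y) := by
  simp [satC, denot, pdenot]

theorem satC_eqC {I : Interp} {α : Assign I} {x y : ℕ} :
    satC I α (eqC x y) ↔ α.vval x = α.vval y := by
  simp [satC, denot, pdenot]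

theorem satS_cons {I : Interp} {α : Assign I} {K : Constraint} {Cs : CSys} :
    satS I α (K ::ₘ Cs) ↔ satC I α K ∧ satS I α Cs := by
  simp [satS]

/-- Soundness of syntactic entailment. -/
theorem entails_sound {I : Interp} {α : Assign I} {Cs : CSys} {K : Constraint}
    (hs : satS I α Cs) (h : Entails Cs K) : satC I α K := by
  induction h with
  | mem hK => exact hs _ hK
  | refl x => exact satC_eqC.2 rfl
  | symm _ ih => exact satC_eqC.2 (satC_eqC.1 ih).symm
  | trans _ _ ih₁ ih₂ => exact satC_eqC.2 ((satC_eqC.1 ih₁).trans (satC_eqC.1 ih₂))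
  | negSymm _ ih =>
    simp only [satC, denot, pdenot, Set.mem_compl_iff, Set.mem_singleton_iff] at ih ⊢
    exact fun e => ih e.symm
  | featEx _ ih =>
    obtain ⟨e', himg, he'⟩ := ih
    have hmem : e' ∈ I.img _ _ := himg ▸ Set.mem_singleton e'
    exact ⟨e', hmem, he'⟩
  | featFa _ ih =>
    obtain ⟨e', himg, he'⟩ := ih
    intro e he
    have hmem : e ∈ I.img _ _ := he
    rw [himg, Set.mem_singleton_iff] at hmem
    exact hmem ▸ he'
  | setEx i _ hi ih =>
    obtain ⟨es, himg, hes⟩ := ih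
    have hmem : es i ∈ I.img _ _ := himg ▸ Set.mem_range_self i
    exact ⟨es i, hmem, hi ▸ hes i⟩

/-- In a model of `x = f:g(y) ∪ h(z) ∧ C_s` with `C_s ⊢ x = ∃f:xᵢ`, one of the two constraints
that ∪Down may add is true. -/
theorem union_split {I : Interp} {α : Assign I} {rest : CSys} {x f g y h z xi : ℕ}
    (hsat : satS I α (.contain x (.union f g y h z) ::ₘ rest))
    (hent : Entails rest (exC x f xi)) :
    satC I α (exC y g xi) ∨ satC I α (exC z h xi) := by
  obtain ⟨hu, hr⟩ := satS_cons.1 hsat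
  have hmem : α.vval xi ∈ I.img f (α.vval x) := satC_exC.1 (entails_sound hr hent)
  have himg : I.img f (α.vval x) = I.img g (α.vval y) ∪ I.img h (α.vval z) := hu
  rw [himg] at hmem
  exact hmem.imp satC_exC.2 satC_exC.2

/-- Adding a true constraint behind the head of a satisfied system keeps it satisfied. -/
theorem satS_insert {I : Interp} {α : Assign I} {K L : Constraint} {rest : CSys}
    (hsat : satS I α (K ::ₘ rest)) (hL : satC I α L) : satS I α (K ::ₘ L ::ₘ rest) :=
  satS_cons.2 ⟨(satS_cons.1 hsat).1, satS_cons.2 ⟨hL, (satS_cons.1 hsat).2⟩⟩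

/-- **Invariance of non-deterministic simplification.** If a
non-deterministic simplification rule (SDis or ∪Down) is applicable to `C_s`
and `I, α` satisfies `C_s`, then at least one non-deterministic choice
transforms `C_s` into a system `C'_s` with `I, α ⊨ C_s` iff `I, α ⊨ C'_s`. -/
theorem nondet_simp_preserves_satisfaction (I : Interp) (α : Assign I)
    (Cs : CSys) (happ : ∃ Cs', SimpStepN Cs Cs') (hsat : satS I α Cs) :
    ∃ Cs', SimpStepN Cs Cs' ∧ (satS I α Cs ↔ satS I α Cs') := by
  -- Both sides of the equivalence hold as soon as the chosen successor is satisfied.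
  suffices h : ∃ Cs', SimpStepN Cs Cs' ∧ satS I α Cs' by
    obtain ⟨Cs', hstep, hs⟩ := h
    exact ⟨Cs', hstep, iff_of_true hsat hs⟩
  obtain ⟨_, hstep⟩ := happ
  cases hstep with
  | sdis _ hCs hno _ =>
    subst hCs
    obtain ⟨i, hi⟩ := (satS_cons.1 hsat).1
    exact ⟨_, .sdis i rfl hno rfl, satS_insert hsat (satC_eqC.2 hi)⟩
  | unionDownL hCs hent hg hh _ | unionDownR hCs hent hg hh _ =>
    subst hCs
    rcases union_split hsat hent with hl | hr
    · exact ⟨_, .unionDownL rfl hent hg hh rfl, satS_insert hsat hl⟩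
    · exact ⟨_, .unionDownR rfl hent hg hh rfl, satS_insert hsat hr⟩

end FeatSetLogic
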